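/- Let 1 < p < ∞ and set τ = min(p,2). There exists a constant C > 0, depending only on n and p, such that for every α ≥ 1 and every compactly supported continuous f : (0,∞) × ℝⁿ → ℂ one has ‖f‖_{T^{p,2}} ≤ ‖f‖_{T_α^{p,2}} ≤ C (1 + log α) α^{n/τ} ‖f‖_{T^{p,2}}. -/

import Mathlib

open MeasureTheory Metric Set
open scoped ENNReal NNReal

noncomputable section

attribute [local instance] Classical.propDecidable

abbrev Rn (n : ℕ) := EuclideanSpace ℝ (Fin n)
abbrev L2 (n : ℕ) : Type := Lp ℂ 2 (volume : Measure (Rn n))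

/-- `f` is a compactly supported continuous function on `(0,∞) × ℝⁿ`. -/
def CcOnPos (n : ℕ) (f : ℝ → Rn n → ℂ) : Prop :=
  Continuous (Function.uncurry f) ∧ HasCompactSupport (Function.uncurry f) ∧
    tsupport (Function.uncurry f) ⊆ Ioi (0:ℝ) ×ˢ (univ : Set (Rn n))

/-- The weighted tent space norm `‖g‖_{T_α^{p,2,m}(t^β dt dy)}`. -/
def tentNorm (n m : ℕ) (β p α : ℝ) (g : ℝ → Rn n → ℂ) : ℝ≥0∞ :=
  (∫⁻ x : Rn n, (∫⁻ t in Ioi (0:ℝ),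
      (∫⁻ y in ball x (α * t ^ ((m:ℝ)⁻¹)), (‖g t y‖₊ : ℝ≥0∞) ^ 2)
        * ENNReal.ofReal (t ^ (β - (n:ℝ)/(m:ℝ)))) ^ (p/2)) ^ (1/p)

lemma tca_lint_Ioo (q b : ℝ) (hq : 0 < q) (hb : 0 ≤ b) :
    ∫⁻ s in Ioc (0:ℝ) b, ENNReal.ofReal (q * s ^ (q-1)) = ENNReal.ofReal (b ^ q) := by
  have hi : IntegrableOn (fun s : ℝ => q * s ^ (q-1)) (Ioc 0 b) := by
    have := (intervalIntegral.intervalIntegrable_rpow' (a := 0) (b := b) (r := q-1) (by linarith)).const_mul q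
    rwa [intervalIntegrable_iff_integrableOn_Ioc_of_le hb] at this
  rw [← ofReal_integral_eq_lintegral_ofReal hi]
  · congr 1
    rw [← intervalIntegral.integral_of_le hb, intervalIntegral.integral_const_mul,
      integral_rpow (Or.inl (by linarith))]
    rw [sub_add_cancel, Real.zero_rpow hq.ne']
    field_simp; simp
  · filter_upwards [ae_restrict_mem measurableSet_Ioc] with s hs
    have := Real.rpow_nonneg hs.1.le (q-1)
    simp only [Pi.zero_apply]; positivity

lemma tca_rpow_eq (q : ℝ) (hq : 0 < q) (a : ℝ≥0∞) :
    a ^ q = ∫⁻ s in Ioi (0:ℝ), ENNReal.ofReal (q * s ^ (q-1)) *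
      (if ENNReal.ofReal s < a then 1 else 0) := by
  have key : ∀ b : ℝ, 0 ≤ b → ∫⁻ s in Ioi (0:ℝ), ENNReal.ofReal (q * s ^ (q-1)) *
      (if ENNReal.ofReal s < ENNReal.ofReal b then 1 else 0) = ENNReal.ofReal b ^ q := by
    intro b hb
    rw [ENNReal.ofReal_rpow_of_nonneg hb hq.le, ← tca_lint_Ioo q b hq hb,
      ← Measure.restrict_congr_set (Ioo_ae_eq_Ioc (μ := volume) (a := (0:ℝ)) (b := b)),
      ← lintegral_indicator measurableSet_Ioi, ← lintegral_indicator measurableSet_Ioo]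
    congr 1; ext s
    by_cases h0 : 0 < s
    · by_cases h1 : s < b
      · rw [indicator_of_mem (by exact h0), indicator_of_mem (by exact ⟨h0, h1⟩), if_pos, mul_one]
        exact (ENNReal.ofReal_lt_ofReal_iff (h0.trans h1)).2 h1
      · rw [indicator_of_mem (by exact h0), indicator_of_notMem (by simp [h1]), if_neg, mul_zero]
        exact not_lt.2 (ENNReal.ofReal_le_ofReal (not_lt.1 h1))
    · rw [indicator_of_notMem (by simpa using h0), indicator_of_notMem (by simp [h0])]
  by_cases ha : a = ⊤
  · subst ha
    rw [ENNReal.top_rpow_of_pos hq]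
    symm
    refine ENNReal.eq_top_of_forall_nnreal_le fun r => ?_
    have h1 := key ((r:ℝ) ^ (1/q)) (by positivity)
    rw [ENNReal.ofReal_rpow_of_nonneg (by positivity) hq.le, ← Real.rpow_mul (by positivity),
      one_div, inv_mul_cancel₀ hq.ne', Real.rpow_one, ENNReal.ofReal_coe_nnreal] at h1
    rw [← h1]
    refine lintegral_mono fun s => ?_
    gcongr
    split_ifs <;> simp_all
  · rw [← ENNReal.ofReal_toReal ha, key _ ENNReal.toReal_nonneg]

lemma tca_layer {X : Type*} [MeasurableSpace X] (μ : Measure X) [SFinite μ] (q : ℝ) (hq : 0 < q)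
    (F : X → ℝ≥0∞) (hF : Measurable F) :
    ∫⁻ x, F x ^ q ∂μ = ∫⁻ s in Ioi (0:ℝ), ENNReal.ofReal (q * s ^ (q-1)) *
      μ {x | ENNReal.ofReal s < F x} := by
  simp_rw [fun x => tca_rpow_eq q hq (F x)]
  rw [lintegral_lintegral_swap]
  · congr 1; ext s
    have hs : MeasurableSet {x | ENNReal.ofReal s < F x} := measurableSet_lt measurable_const hF
    rw [lintegral_const_mul']
    · congr 1
      rw [← lintegral_indicator_one hs]
      simp [indicator_apply]
    · exact ENNReal.ofReal_ne_top
  · apply Measurable.aemeasurable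
    apply Measurable.mul
    · fun_prop
    · apply Measurable.ite _ measurable_const measurable_const
      exact measurableSet_lt (by fun_prop) (by fun_prop)

/-- tail bound -/
lemma tca_tail (r : ℝ) (hr : 0 < r) (hr1 : r < 1) (a : ℝ≥0∞) :
    a * ∫⁻ s in Ioi (0:ℝ), ENNReal.ofReal (r * s ^ (r-2)) *
      (if a ≤ ENNReal.ofReal s then 1 else 0) ≤ ENNReal.ofReal (r / (1-r)) * a ^ r := by
  by_cases ha : a = ⊤
  · subst ha; simp
  by_cases ha0 : a = 0
  · subst ha0; simp
  obtain ⟨b, hb, rfl⟩ : ∃ b : ℝ, 0 < b ∧ a = ENNReal.ofReal b :=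
    ⟨a.toReal, ENNReal.toReal_pos ha0 ha, (ENNReal.ofReal_toReal ha).symm⟩
  have hi : IntegrableOn (fun s : ℝ => r * s ^ (r-2)) (Ioi b) :=
    (integrableOn_Ioi_rpow_of_lt (by linarith) hb).const_mul r
  have : ∫⁻ s in Ioi (0:ℝ), ENNReal.ofReal (r * s ^ (r-2)) *
      (if ENNReal.ofReal b ≤ ENNReal.ofReal s then 1 else 0)
      = ∫⁻ s in Ioi b, ENNReal.ofReal (r * s ^ (r-2)) := by
    rw [Measure.restrict_congr_set (Ioi_ae_eq_Ici (μ := volume) (a := b)),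
      ← lintegral_indicator measurableSet_Ioi, ← lintegral_indicator measurableSet_Ici]
    congr 1; ext s
    by_cases h0 : 0 < s
    · by_cases h1 : b ≤ s
      · rw [indicator_of_mem (by exact h0), indicator_of_mem (by exact h1), if_pos, mul_one]
        exact ENNReal.ofReal_le_ofReal h1
      · rw [indicator_of_mem (by exact h0), indicator_of_notMem (by simpa using h1), if_neg, mul_zero]
        exact not_le.2 ((ENNReal.ofReal_lt_ofReal_iff hb).2 (not_le.1 h1))
    · rw [indicator_of_notMem (by simpa using h0), indicator_of_notMem (by simp; linarith)]
  rw [this, ← ofReal_integral_eq_lintegral_ofReal hi, integral_const_mul,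
    integral_Ioi_rpow_of_lt (by linarith) hb, ENNReal.ofReal_rpow_of_nonneg hb.le hr.le,
    ← ENNReal.ofReal_mul hb.le, ← ENNReal.ofReal_mul (by apply div_nonneg <;> linarith)]
  · apply ENNReal.ofReal_le_ofReal
    apply le_of_eq
    have h1 : b ^ r = b * b ^ (r - 2 + 1) := by
      nth_rw 2 [← Real.rpow_one b]
      rw [← Real.rpow_add hb]; congr 1; ring
    rw [h1]
    have : r - 2 + 1 ≠ 0 := by linarith
    have : 1 - r ≠ 0 := by linarith
    rw [show r - 2 + 1 = -(1-r) by ring] at *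
    field_simp
  · filter_upwards [ae_restrict_mem measurableSet_Ioi] with s hs
    have := Real.rpow_nonneg (hb.trans hs).le (r-2)
    simp only [Pi.zero_apply]; positivity

/-- Uncentred Hardy-Littlewood maximal function. -/
def tcaM (n : ℕ) (h : Rn n → ℝ≥0∞) (x : Rn n) : ℝ≥0∞ :=
  ⨆ (c : Rn n) (r : ℝ) (_ : x ∈ ball c r), (∫⁻ y in ball c r, h y) / volume (ball c r)

lemma tcaM_lt (n : ℕ) (h : Rn n → ℝ≥0∞) (x : Rn n) (s : ℝ≥0∞) :
    s < tcaM n h x ↔ ∃ c r, x ∈ ball c r ∧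
      s < (∫⁻ y in ball c r, h y) / volume (ball c r) := by
  simp only [tcaM, lt_iSup_iff, exists_prop]

lemma tcaM_isOpen (n : ℕ) (h : Rn n → ℝ≥0∞) (s : ℝ≥0∞) : IsOpen {x | s < tcaM n h x} := by
  rw [isOpen_iff_mem_nhds]
  intro x hx
  obtain ⟨c, r, hc, hs⟩ := (tcaM_lt n h x s).1 hx
  filter_upwards [isOpen_ball.mem_nhds hc] with y hy
  exact (tcaM_lt n h y s).2 ⟨c, r, hy, hs⟩

lemma tcaM_measurable (n : ℕ) (h : Rn n → ℝ≥0∞) : Measurable (tcaM n h) :=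
  measurable_of_Ioi fun s => (tcaM_isOpen n h s).measurableSet

lemma tcaM_le (n : ℕ) (h : Rn n → ℝ≥0∞) {x c : Rn n} {r : ℝ} (hx : x ∈ ball c r) :
    ∫⁻ y in ball c r, h y ≤ tcaM n h x * volume (ball c r) := by
  have h0 : volume (ball c r) ≠ 0 := (measure_ball_pos volume c (pos_of_mem_ball hx)).ne'
  rw [← ENNReal.div_le_iff h0 measure_ball_lt_top.ne]
  exact le_iSup_of_le c (le_iSup_of_le r (le_iSup_of_le hx le_rfl))

lemma tca_vol_ball (n : ℕ) (c : Rn n) (a r : ℝ) (ha : 0 < a) :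
    volume (ball c (a * r)) = ENNReal.ofReal (a ^ n) * volume (ball c r) := by
  rw [Measure.addHaar_ball_mul_of_pos volume c ha, Measure.addHaar_ball_center volume c r]
  simp

lemma tcaM_weak (n : ℕ) (hn : 1 ≤ n) (h : Rn n → ℝ≥0∞) (s : ℝ≥0∞) (hs : s ≠ 0) (hst : s ≠ ⊤) :
    s * volume {x | s < tcaM n h x} ≤ ENNReal.ofReal (5 ^ n) * ∫⁻ x, h x := by
  have : Nonempty (Fin n) := ⟨⟨0, hn⟩⟩
  by_cases hI : ∫⁻ x, h x = ⊤
  · rw [hI, ENNReal.mul_top (by simp)]; exact le_top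
  let t : Set (Rn n × ℝ) := {z | 0 < z.2 ∧ s < (∫⁻ y in ball z.1 z.2, h y) / volume (ball z.1 z.2)}
  have hlt : ∀ z ∈ t, s * volume (ball z.1 z.2) ≤ ∫⁻ y in ball z.1 z.2, h y := by
    intro z hz
    rw [← ENNReal.le_div_iff_mul_le]
    · exact hz.2.le
    · exact Or.inl (measure_ball_pos volume _ hz.1).ne'
    · exact Or.inl measure_ball_lt_top.ne
  set v := volume (ball (0 : Rn n) 1) with hv
  have hv0 : v ≠ 0 := (measure_ball_pos volume _ one_pos).ne'
  have hvt : v ≠ ⊤ := measure_ball_lt_top.ne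
  have hR : ∀ z ∈ t, z.2 ≤ max 1 ((∫⁻ x, h x) / (s * v)).toReal := by
    intro z hz
    by_cases h1 : z.2 ≤ 1
    · exact h1.trans (le_max_left _ _)
    · refine le_max_of_le_right ?_
      have h2 := (hlt z hz).trans (setLIntegral_le_lintegral _ _)
      rw [Measure.addHaar_ball_of_pos volume _ hz.1, ← hv, finrank_euclideanSpace_fin] at h2
      have h3 : ENNReal.ofReal (z.2 ^ n) ≤ (∫⁻ x, h x) / (s * v) := by
        rw [ENNReal.le_div_iff_mul_le (Or.inl (mul_ne_zero hs hv0))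
          (Or.inl (ENNReal.mul_ne_top hst hvt))]
        refine le_trans (le_of_eq ?_) h2
        ring
      have h4 := (ENNReal.ofReal_le_iff_le_toReal
        (ENNReal.div_ne_top hI (mul_ne_zero hs hv0))).1 h3
      refine le_trans ?_ h4
      exact le_self_pow₀ (not_le.1 h1).le (by omega)
  obtain ⟨u, hut, hud, huc⟩ := Vitali.exists_disjoint_subfamily_covering_enlargement_closedBall
    t (fun z => z.1) (fun z => z.2) _ hR 5 (by norm_num)
  have hud' : u.PairwiseDisjoint fun z => ball z.1 z.2 := fun a ha b hb hab =>
    (hud ha hb hab).mono ball_subset_closedBall ball_subset_closedBall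
  have hcount : u.Countable := hud'.countable_of_isOpen (fun _ _ => isOpen_ball)
    (fun z hz => ⟨z.1, mem_ball_self (hut hz).1⟩)
  have hcov : {x | s < tcaM n h x} ⊆ ⋃ z ∈ u, closedBall z.1 (5 * z.2) := by
    intro x hx
    obtain ⟨c, r, hc, hcr⟩ := (tcaM_lt n h x s).1 hx
    obtain ⟨b, hb, hsub⟩ := huc (c, r) ⟨pos_of_mem_ball hc, hcr⟩
    exact mem_biUnion hb (hsub (ball_subset_closedBall hc))
  have := hcount.to_subtype
  calc s * volume {x | s < tcaM n h x}
      ≤ s * ∑' z : u, volume (closedBall z.1.1 (5 * z.1.2)) := by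
        gcongr
        exact (measure_mono hcov).trans (measure_biUnion_le _ hcount _)
    _ = ∑' z : u, ENNReal.ofReal (5 ^ n) * (s * volume (ball z.1.1 z.1.2)) := by
        rw [← ENNReal.tsum_mul_left]
        congr 1; ext z
        rw [Measure.addHaar_closedBall_eq_addHaar_ball, tca_vol_ball n _ 5 _ (by norm_num)]
        ring
    _ ≤ ∑' z : u, ENNReal.ofReal (5 ^ n) * ∫⁻ y in ball z.1.1 z.1.2, h y := by
        gcongr with z
        exact hlt z.1 (hut z.2)
    _ = ENNReal.ofReal (5 ^ n) * ∫⁻ y in ⋃ z ∈ u, ball z.1 z.2, h y := by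
        rw [ENNReal.tsum_mul_left, lintegral_biUnion hcount (fun _ _ => measurableSet_ball) hud']
    _ ≤ _ := by gcongr; exact Measure.restrict_le_self

lemma tcaM_strong (n : ℕ) (hn : 1 ≤ n) (q : ℝ) (hq : 1 < q) (h : Rn n → ℝ≥0∞) (hh : Measurable h) :
    ∫⁻ x, tcaM n h x ^ q ≤
      ENNReal.ofReal (5 ^ n * 2 * (q / (q-1)) * 2 ^ (q-1)) * ∫⁻ x, h x ^ q := by
  rw [tca_layer volume q (by linarith) _ (tcaM_measurable n h)]
  have hw : ∀ s : ℝ, 0 < s → ENNReal.ofReal s * volume {x | ENNReal.ofReal s < tcaM n h x} ≤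
      ENNReal.ofReal (5 ^ n * 2) * ∫⁻ x, h x * (if ENNReal.ofReal s < 2 * h x then 1 else 0) := by
    intro s hs
    set g : Rn n → ℝ≥0∞ := fun x => h x * (if ENNReal.ofReal s < 2 * h x then 1 else 0) with hg
    have hs2 : ENNReal.ofReal s = 2 * ENNReal.ofReal (s/2) := by
      rw [show (2:ℝ≥0∞) = ENNReal.ofReal 2 by simp, ← ENNReal.ofReal_mul (by norm_num)]
      congr 1; ring
    have hle : ∀ x, h x ≤ g x + ENNReal.ofReal (s/2) := by
      intro x
      by_cases hx : ENNReal.ofReal s < 2 * h x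
      · simp [hg, hx]
      · simp only [hg, hx, if_false, mul_zero, zero_add]
        rw [hs2, not_lt, ENNReal.mul_le_mul_iff_right (by simp) (by simp)] at hx
        exact hx
    have hsub : {x | ENNReal.ofReal s < tcaM n h x} ⊆ {x | ENNReal.ofReal (s/2) < tcaM n g x} := by
      intro x hx
      obtain ⟨c, r, hc, hcr⟩ := (tcaM_lt n h x _).1 hx
      refine (tcaM_lt n g x _).2 ⟨c, r, hc, ?_⟩
      have h0 : volume (ball c r) ≠ 0 := (measure_ball_pos volume c (pos_of_mem_ball hc)).ne'
      have ht : volume (ball c r) ≠ ⊤ := measure_ball_lt_top.ne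
      by_contra hcon
      rw [not_lt] at hcon
      refine absurd hcr (not_lt.2 ?_)
      rw [ENNReal.div_le_iff h0 ht] at hcon ⊢
      calc ∫⁻ y in ball c r, h y ≤ ∫⁻ y in ball c r, (g y + ENNReal.ofReal (s/2)) :=
            lintegral_mono fun y => hle y
        _ = (∫⁻ y in ball c r, g y) + ENNReal.ofReal (s/2) * volume (ball c r) := by
            rw [lintegral_add_right _ measurable_const]; simp
        _ ≤ ENNReal.ofReal (s/2) * volume (ball c r) + ENNReal.ofReal (s/2) * volume (ball c r) := by
            gcongr
        _ = ENNReal.ofReal s * volume (ball c r) := by rw [hs2]; ring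
    calc ENNReal.ofReal s * volume {x | ENNReal.ofReal s < tcaM n h x}
        ≤ 2 * (ENNReal.ofReal (s/2) * volume {x | ENNReal.ofReal (s/2) < tcaM n g x}) := by
          rw [← mul_assoc, ← hs2]; gcongr
      _ ≤ 2 * (ENNReal.ofReal (5 ^ n) * ∫⁻ x, g x) := by
          exact mul_le_mul_right (tcaM_weak n hn g _ (by simpa using hs) ENNReal.ofReal_ne_top) _
      _ = _ := by
          rw [ENNReal.ofReal_mul (by positivity)]; simp; ring
  set K := ENNReal.ofReal (5 ^ n * 2 * (q / (q-1))) with hK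
  have hq1 : 0 < q - 1 := by linarith
  calc ∫⁻ s in Ioi (0:ℝ), ENNReal.ofReal (q * s ^ (q-1)) * volume {x | ENNReal.ofReal s < tcaM n h x}
      ≤ ∫⁻ s in Ioi (0:ℝ), K * ∫⁻ x, h x * (ENNReal.ofReal ((q-1) * s ^ (q-1-1)) *
          (if ENNReal.ofReal s < 2 * h x then 1 else 0)) := by
        refine setLIntegral_mono' measurableSet_Ioi fun s hs => ?_
        have hs : 0 < s := hs
        have e1 : ENNReal.ofReal (q * s ^ (q-1)) =
            ENNReal.ofReal (q / (q-1)) * ENNReal.ofReal ((q-1) * s ^ (q-1-1)) * ENNReal.ofReal s := by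
          rw [← ENNReal.ofReal_mul (by positivity), ← ENNReal.ofReal_mul (by positivity)]
          congr 1
          rw [Real.rpow_sub_one hs.ne' (q-1)]
          field_simp
        rw [e1, mul_assoc]
        refine (mul_le_mul_right (hw s hs) _).trans (le_of_eq ?_)
        have e2 : ∫⁻ x, h x * (ENNReal.ofReal ((q-1) * s ^ (q-1-1)) *
          (if ENNReal.ofReal s < 2 * h x then 1 else 0)) = ENNReal.ofReal ((q-1) * s ^ (q-1-1)) *
            ∫⁻ x, h x * (if ENNReal.ofReal s < 2 * h x then 1 else 0) := by
          rw [← lintegral_const_mul' _ _ ENNReal.ofReal_ne_top]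
          congr 1; ext x; ring
        rw [e2, hK, ENNReal.ofReal_mul (p := 5 ^ n * 2) (by positivity)]
        ring
    _ = K * ∫⁻ x, h x * (2 * h x) ^ (q-1) := by
        rw [lintegral_const_mul' _ _ ENNReal.ofReal_ne_top, lintegral_lintegral_swap]
        · congr 2; ext x
          rw [lintegral_const_mul, ← tca_rpow_eq (q-1) hq1]
          apply Measurable.mul (by fun_prop)
          exact Measurable.ite (measurableSet_lt (by fun_prop) (by fun_prop)) measurable_const measurable_const
        · apply Measurable.aemeasurable
          apply Measurable.mul (by fun_prop)
          apply Measurable.mul (by fun_prop)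
          exact Measurable.ite (measurableSet_lt (by fun_prop) (by fun_prop)) measurable_const measurable_const
    _ = _ := by
        have e3 : ∫⁻ x, h x * (2 * h x) ^ (q-1) = ENNReal.ofReal (2 ^ (q-1)) * ∫⁻ x, h x ^ q := by
          rw [← lintegral_const_mul' _ _ ENNReal.ofReal_ne_top]
          refine lintegral_congr fun x => ?_
          rw [ENNReal.mul_rpow_of_nonneg _ _ hq1.le,
            ← ENNReal.ofReal_rpow_of_nonneg (by norm_num) hq1.le]
          have e4 : h x ^ q = h x * h x ^ (q-1) := by
            nth_rw 1 [show q = 1 + (q-1) by ring]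
            rw [ENNReal.rpow_add_of_nonneg _ _ (by norm_num) hq1.le, ENNReal.rpow_one]
          rw [e4]
          simp; ring
        rw [e3, ENNReal.ofReal_mul (p := 5 ^ n * 2 * (q / (q-1))) (by positivity), mul_assoc]

/-- The square of the conical functional, for a measure on the half space. -/
def tcaS (n : ℕ) (ν : Measure (ℝ × Rn n)) (α : ℝ) (x : Rn n) : ℝ≥0∞ :=
  ν {z | dist x z.2 < α * z.1}

lemma tcaS_set_meas (n : ℕ) (α : ℝ) :
    MeasurableSet {w : Rn n × (ℝ × Rn n) | dist w.1 w.2.2 < α * w.2.1} :=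
  measurableSet_lt (by fun_prop) (by fun_prop)

lemma tcaS_measurable (n : ℕ) (ν : Measure (ℝ × Rn n)) [SFinite ν] (α : ℝ) :
    Measurable (tcaS n ν α) :=
  measurable_measure_prodMk_left (tcaS_set_meas n α)

lemma tcaS_mono (n : ℕ) (ν : Measure (ℝ × Rn n)) (α : ℝ) (hα : 1 ≤ α) (x : Rn n) :
    tcaS n ν 1 x ≤ tcaS n ν α x := by
  refine measure_mono fun z hz => ?_
  simp only [mem_ofPred_eq, one_mul] at hz ⊢
  have : 0 < z.1 := lt_of_le_of_lt dist_nonneg hz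
  nlinarith

lemma tcaS_swap (n : ℕ) (ν : Measure (ℝ × Rn n)) [SFinite ν] (α : ℝ) (h : Rn n → ℝ≥0∞)
    (hh : Measurable h) :
    ∫⁻ x, tcaS n ν α x * h x = ∫⁻ z, (∫⁻ x in ball z.2 (α * z.1), h x) ∂ν := by
  have e1 : ∀ x, tcaS n ν α x * h x =
      ∫⁻ z, (if dist x z.2 < α * z.1 then h x else 0) ∂ν := by
    intro x
    have hm : MeasurableSet {z : ℝ × Rn n | dist x z.2 < α * z.1} :=
      measurableSet_lt (by fun_prop) (by fun_prop)
    rw [tcaS, mul_comm, ← lintegral_indicator_const hm]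
    simp [indicator_apply]
  have e2 : ∀ z : ℝ × Rn n, ∫⁻ x in ball z.2 (α * z.1), h x =
      ∫⁻ x, (if dist x z.2 < α * z.1 then h x else 0) := by
    intro z
    rw [← lintegral_indicator measurableSet_ball]
    simp [indicator_apply]
  simp_rw [e1, e2]
  rw [lintegral_lintegral_swap]
  exact (Measurable.ite (tcaS_set_meas n α) (by fun_prop) measurable_const).aemeasurable

lemma tca_eq (n : ℕ) (ν : Measure (ℝ × Rn n)) [SFinite ν] (α : ℝ) (hα : 1 ≤ α) :
    ∫⁻ x, tcaS n ν α x = ENNReal.ofReal (α ^ n) * ∫⁻ x, tcaS n ν 1 x := by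
  have h1 := tcaS_swap n ν α (fun _ => 1) measurable_const
  have h2 := tcaS_swap n ν 1 (fun _ => 1) measurable_const
  simp only [mul_one, one_mul, lintegral_const, Measure.restrict_apply_univ] at h1 h2
  rw [h1, h2, ← lintegral_const_mul' _ _ ENNReal.ofReal_ne_top]
  exact lintegral_congr fun z => tca_vol_ball n _ _ _ (by linarith)

lemma tca_max (n : ℕ) (ν : Measure (ℝ × Rn n)) [SFinite ν] (α : ℝ) (hα : 1 ≤ α)
    (h : Rn n → ℝ≥0∞) (hh : Measurable h) :
    ∫⁻ x, tcaS n ν α x * h x ≤ ENNReal.ofReal (α ^ n) * ∫⁻ x, tcaS n ν 1 x * tcaM n h x := by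
  rw [tcaS_swap n ν α h hh, tcaS_swap n ν 1 _ (tcaM_measurable n h),
    ← lintegral_const_mul' _ _ ENNReal.ofReal_ne_top]
  refine lintegral_mono fun z => ?_
  simp only [one_mul]
  by_cases hz : 0 < z.1
  · have h0 : volume (ball z.2 z.1) ≠ 0 := (measure_ball_pos volume _ hz).ne'
    have ht : volume (ball z.2 z.1) ≠ ⊤ := measure_ball_lt_top.ne
    set I := ∫⁻ x in ball z.2 (α * z.1), h x with hI
    have h1 : ∀ x ∈ ball z.2 z.1, I / volume (ball z.2 z.1) ≤ ENNReal.ofReal (α ^ n) * tcaM n h x := by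
      intro x hx
      rw [ENNReal.div_le_iff h0 ht]
      have := tcaM_le n h (ball_subset_ball (by nlinarith : z.1 ≤ α * z.1) hx)
      rw [tca_vol_ball n _ _ _ (by linarith)] at this
      refine this.trans (le_of_eq (by ring))
    have h2 := setLIntegral_mono' (μ := volume) measurableSet_ball h1
    rw [lintegral_const_mul' _ _ ENNReal.ofReal_ne_top] at h2
    refine le_trans (le_of_eq ?_) h2
    simp [ENNReal.div_mul_cancel h0 ht]
  · rw [ball_eq_empty.2 (by nlinarith)]; simp

lemma tca_gt_one (n : ℕ) (hn : 1 ≤ n) (r : ℝ) (hr : 1 < r) : ∃ C : ℝ, 0 < C ∧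
    ∀ (ν : Measure (ℝ × Rn n)) [SFinite ν] (α : ℝ), 1 ≤ α → ∫⁻ x, tcaS n ν α x ^ r ≠ ⊤ →
    (∫⁻ x, tcaS n ν α x ^ r) ^ (1/r) ≤
      ENNReal.ofReal (C * α ^ n) * (∫⁻ x, tcaS n ν 1 x ^ r) ^ (1/r) := by
  set q := Real.conjExponent r with hqdef
  have hc : r.HolderConjugate q := Real.HolderConjugate.conjExponent hr
  have hq1 : 1 < q := hc.symm.lt
  have hq0 : 0 < q := by linarith
  have hr0 : 0 < r := by linarith
  have hq11 : 0 < q - 1 := by linarith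
  set K := (5:ℝ) ^ n * 2 * (q / (q-1)) * 2 ^ (q-1) with hK
  have hK0 : 0 < K := by positivity
  refine ⟨K ^ (1/q), by positivity, ?_⟩
  intro ν _ α hα hfin
  set J := ∫⁻ x, tcaS n ν α x ^ r with hJ
  have hSm := tcaS_measurable n ν α
  have hSm1 := tcaS_measurable n ν 1
  by_cases hJ0 : J = 0
  · rw [hJ0, ENNReal.zero_rpow_of_pos (by positivity)]; exact zero_le
  have hmain : J ≤ ENNReal.ofReal (α ^ n) * ((∫⁻ x, tcaS n ν 1 x ^ r) ^ (1/r) *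
      (ENNReal.ofReal (K ^ (1/q)) * J ^ (1/q))) := by
    calc J = ∫⁻ x, tcaS n ν α x * tcaS n ν α x ^ (r-1) := by
          refine lintegral_congr fun x => ?_
          nth_rw 1 [show r = 1 + (r-1) by ring]
          rw [ENNReal.rpow_add_of_nonneg _ _ (by norm_num) (by linarith), ENNReal.rpow_one]
      _ ≤ _ := tca_max n ν α hα _ (hSm.pow_const _)
      _ ≤ _ := by
          gcongr
          refine (ENNReal.lintegral_mul_le_Lp_mul_Lq volume hc hSm1.aemeasurable
            (tcaM_measurable n _).aemeasurable).trans ?_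
          gcongr
          rw [← ENNReal.ofReal_rpow_of_nonneg hK0.le (by positivity),
            ← ENNReal.mul_rpow_of_nonneg _ _ (by positivity)]
          gcongr
          refine (tcaM_strong n hn q hq1 _ (hSm.pow_const _)).trans (le_of_eq ?_)
          congr 1
          refine lintegral_congr fun x => ?_
          rw [← ENNReal.rpow_mul]
          congr 1
          have := hc.mul_eq_add
          nlinarith
  have hJq0 : J ^ (1/q) ≠ 0 := by simp [hJ0, hfin]
  have hJqt : J ^ (1/q) ≠ ⊤ := ENNReal.rpow_ne_top_of_nonneg (by positivity) hfin
  rw [← ENNReal.mul_le_mul_iff_left hJq0 hJqt, ← ENNReal.rpow_add _ _ hJ0 hfin]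
  have h1 : 1/r + 1/q = 1 := by simpa using hc.inv_add_inv_eq_one
  rw [h1, ENNReal.rpow_one]
  refine hmain.trans (le_of_eq ?_)
  rw [ENNReal.ofReal_mul (by positivity)]
  ring

lemma tca_good (n : ℕ) (hn : 1 ≤ n) (ν : Measure (ℝ × Rn n)) [SFinite ν] (α : ℝ) (hα : 1 ≤ α)
    (s : ℝ) (hs : 0 < s) :
    volume {x | ENNReal.ofReal s < tcaS n ν α x} ≤
      ENNReal.ofReal (2 * 5 ^ n * α ^ n) * volume {x | ENNReal.ofReal s < tcaS n ν 1 x} +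
      ENNReal.ofReal (1/s) * (ENNReal.ofReal (2 * α ^ n) *
        ∫⁻ x, tcaS n ν 1 x * (if tcaS n ν 1 x ≤ ENNReal.ofReal s then 1 else 0)) := by
  have hα0 : 0 < α := by linarith
  have hSm := tcaS_measurable n ν α
  have hSm1 := tcaS_measurable n ν 1
  set O := {x | ENNReal.ofReal s < tcaS n ν 1 x} with hO
  have hOm : MeasurableSet O := measurableSet_lt measurable_const hSm1
  set c := ENNReal.ofReal (1 / (2 * α ^ n)) with hcdef
  have hc0 : c ≠ 0 := by simp only [hcdef, ne_eq, ENNReal.ofReal_eq_zero, not_le]; positivity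
  set P := {x | c < tcaM n (O.indicator 1) x} with hP
  have hPm : MeasurableSet P := (tcaM_isOpen n _ c).measurableSet
  have hPO : volume P ≤ ENNReal.ofReal (2 * 5 ^ n * α ^ n) * volume O := by
    have := tcaM_weak n hn (O.indicator 1) c hc0 ENNReal.ofReal_ne_top
    rw [lintegral_indicator_one hOm] at this
    have e : ENNReal.ofReal (2 * α ^ n) * c = 1 := by
      rw [hcdef, ← ENNReal.ofReal_mul (by positivity)]
      rw [mul_one_div_cancel (by positivity)]; simp
    calc volume P = ENNReal.ofReal (2 * α ^ n) * (c * volume P) := by rw [← mul_assoc, e, one_mul]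
      _ ≤ ENNReal.ofReal (2 * α ^ n) * (ENNReal.ofReal (5 ^ n) * volume O) := by gcongr
      _ = _ := by
        rw [← mul_assoc, ← ENNReal.ofReal_mul (by positivity)]; congr 2; ring
  have hint : ∫⁻ x, tcaS n ν α x * Pᶜ.indicator 1 x ≤
      ENNReal.ofReal (2 * α ^ n) * ∫⁻ x, tcaS n ν 1 x * Oᶜ.indicator 1 x := by
    rw [tcaS_swap n ν α _ (measurable_one.indicator hPm.compl),
      tcaS_swap n ν 1 _ (measurable_one.indicator hOm.compl),
      ← lintegral_const_mul' _ _ ENNReal.ofReal_ne_top]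
    refine lintegral_mono fun z => ?_
    simp only [one_mul]
    rw [lintegral_indicator_one hPm.compl, lintegral_indicator_one hOm.compl,
      Measure.restrict_apply hPm.compl, Measure.restrict_apply hOm.compl]
    rcases (Pᶜ ∩ ball z.2 (α * z.1)).eq_empty_or_nonempty with he | ⟨x, hxP, hxb⟩
    · rw [he]; simp
    have hz : 0 < z.1 := by
      have := pos_of_mem_ball hxb
      exact pos_of_mul_pos_right this hα0.le
    have ht : volume (ball z.2 z.1) ≠ ⊤ := measure_ball_lt_top.ne
    have hx : tcaM n (O.indicator 1) x ≤ c := not_lt.1 hxP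
    have h1 := tcaM_le n (O.indicator 1) hxb
    rw [lintegral_indicator_one hOm, Measure.restrict_apply hOm, tca_vol_ball n _ _ _ hα0] at h1
    have h2 : volume (O ∩ ball z.2 z.1) ≤ ENNReal.ofReal (1/2) * volume (ball z.2 z.1) := by
      calc volume (O ∩ ball z.2 z.1) ≤ volume (O ∩ ball z.2 (α * z.1)) := by
            gcongr; nlinarith
        _ ≤ c * (ENNReal.ofReal (α ^ n) * volume (ball z.2 z.1)) := h1.trans (by gcongr)
        _ = _ := by
          rw [← mul_assoc, hcdef, ← ENNReal.ofReal_mul (by positivity)]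
          congr 2; field_simp
    have h3 : volume (ball z.2 z.1) = volume (O ∩ ball z.2 z.1) + volume (Oᶜ ∩ ball z.2 z.1) := by
      rw [← measure_inter_add_diff (ball z.2 z.1) hOm, inter_comm, diff_eq, inter_comm (ball z.2 z.1) Oᶜ]
    set V := volume (ball z.2 z.1) with hV
    have h4 : V ≤ 2 * volume (Oᶜ ∩ ball z.2 z.1) := by
      have hVV : ENNReal.ofReal (1/2) * V + ENNReal.ofReal (1/2) * V = V := by
        rw [← add_mul, ← ENNReal.ofReal_add (by norm_num) (by norm_num)]; norm_num
      have hfin : ENNReal.ofReal (1/2) * V ≠ ⊤ := ENNReal.mul_ne_top ENNReal.ofReal_ne_top ht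
      have h5 : ENNReal.ofReal (1/2) * V ≤ volume (Oᶜ ∩ ball z.2 z.1) := by
        rw [← ENNReal.add_le_add_iff_left hfin, hVV]
        nth_rw 1 [h3]
        gcongr
      rw [← hVV, two_mul]
      gcongr
    calc volume (Pᶜ ∩ ball z.2 (α * z.1)) ≤ volume (ball z.2 (α * z.1)) := measure_mono inter_subset_right
      _ = ENNReal.ofReal (α ^ n) * V := tca_vol_ball n _ _ _ hα0
      _ ≤ ENNReal.ofReal (α ^ n) * (2 * volume (Oᶜ ∩ ball z.2 z.1)) := by gcongr
      _ = _ := by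
        rw [ENNReal.ofReal_mul (by norm_num)]; simp; ring
  have hOc : ∫⁻ x, tcaS n ν 1 x * Oᶜ.indicator 1 x =
      ∫⁻ x, tcaS n ν 1 x * (if tcaS n ν 1 x ≤ ENNReal.ofReal s then 1 else 0) := by
    refine lintegral_congr fun x => ?_
    simp [indicator_apply, hO]
  rw [hOc] at hint
  have hmk : volume {x | ENNReal.ofReal s ≤ tcaS n ν α x * Pᶜ.indicator 1 x} ≤
      ENNReal.ofReal (1/s) * ∫⁻ x, tcaS n ν α x * Pᶜ.indicator 1 x := by
    have := mul_meas_ge_le_lintegral (μ := volume)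
      (hSm.mul (measurable_one.indicator hPm.compl)) (ENNReal.ofReal s)
    calc _ = ENNReal.ofReal (1/s) * (ENNReal.ofReal s *
          volume {x | ENNReal.ofReal s ≤ tcaS n ν α x * Pᶜ.indicator 1 x}) := by
          rw [← mul_assoc, ← ENNReal.ofReal_mul (by positivity), one_div_mul_cancel hs.ne']; simp
      _ ≤ _ := by gcongr; exact this
  have hsub : {x | ENNReal.ofReal s < tcaS n ν α x} ⊆
      P ∪ {x | ENNReal.ofReal s ≤ tcaS n ν α x * Pᶜ.indicator 1 x} := by
    intro x hx
    by_cases hxP : x ∈ P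
    · exact Or.inl hxP
    · right
      have hx : ENNReal.ofReal s < tcaS n ν α x := hx
      simp only [mem_ofPred_eq]
      rw [indicator_of_mem (by exact hxP)]
      simpa using hx.le
  refine (measure_mono hsub).trans ((measure_union_le _ _).trans ?_)
  exact add_le_add hPO (hmk.trans (by gcongr))

lemma tca_lt_one (n : ℕ) (hn : 1 ≤ n) (r : ℝ) (hr : 0 < r) (hr1 : r < 1) : ∃ C : ℝ, 0 < C ∧
    ∀ (ν : Measure (ℝ × Rn n)) [SFinite ν] (α : ℝ), 1 ≤ α →
    ∫⁻ x, tcaS n ν α x ^ r ≤ ENNReal.ofReal (C * α ^ n) * ∫⁻ x, tcaS n ν 1 x ^ r := by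
  have hr2 : 0 < 1 - r := by linarith
  refine ⟨2 * 5 ^ n + 2 * (r / (1-r)), by positivity, ?_⟩
  intro ν _ α hα
  have hα0 : 0 < α := by linarith
  have hSm := tcaS_measurable n ν α
  have hSm1 := tcaS_measurable n ν 1
  have hite : Measurable fun w : ℝ × Rn n =>
      (if tcaS n ν 1 w.2 ≤ ENNReal.ofReal w.1 then (1:ℝ≥0∞) else 0) :=
    Measurable.ite (measurableSet_le (by fun_prop) (by fun_prop)) measurable_const measurable_const
  rw [tca_layer volume r hr _ hSm]
  calc ∫⁻ s in Ioi (0:ℝ), ENNReal.ofReal (r * s ^ (r-1)) * volume {x | ENNReal.ofReal s < tcaS n ν α x}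
      ≤ ∫⁻ s in Ioi (0:ℝ), (ENNReal.ofReal (2 * 5 ^ n * α ^ n) * (ENNReal.ofReal (r * s ^ (r-1)) *
          volume {x | ENNReal.ofReal s < tcaS n ν 1 x}) + ENNReal.ofReal (2 * α ^ n) *
          ∫⁻ x, tcaS n ν 1 x * (ENNReal.ofReal (r * s ^ (r-2)) *
            (if tcaS n ν 1 x ≤ ENNReal.ofReal s then 1 else 0))) := by
        refine setLIntegral_mono' measurableSet_Ioi fun s hs => ?_
        have hs : 0 < s := hs
        refine (mul_le_mul_right (tca_good n hn ν α hα s hs) _).trans (le_of_eq ?_)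
        have e2 : ∫⁻ x, tcaS n ν 1 x * (ENNReal.ofReal (r * s ^ (r-2)) *
            (if tcaS n ν 1 x ≤ ENNReal.ofReal s then 1 else 0)) = ENNReal.ofReal (r * s ^ (r-2)) *
            ∫⁻ x, tcaS n ν 1 x * (if tcaS n ν 1 x ≤ ENNReal.ofReal s then 1 else 0) := by
          rw [← lintegral_const_mul' _ _ ENNReal.ofReal_ne_top]
          refine lintegral_congr fun x => ?_
          ring
        have e1 : ENNReal.ofReal (r * s ^ (r-2)) =
            ENNReal.ofReal (r * s ^ (r-1)) * ENNReal.ofReal (1/s) := by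
          rw [← ENNReal.ofReal_mul (by positivity)]
          congr 1
          rw [show r - 2 = r - 1 - 1 by ring, Real.rpow_sub_one hs.ne' (r-1)]
          field_simp
        rw [e2, e1]
        ring
    _ = ENNReal.ofReal (2 * 5 ^ n * α ^ n) * (∫⁻ x, tcaS n ν 1 x ^ r) +
        ENNReal.ofReal (2 * α ^ n) * ∫⁻ x, tcaS n ν 1 x *
          ∫⁻ s in Ioi (0:ℝ), (ENNReal.ofReal (r * s ^ (r-2)) *
            (if tcaS n ν 1 x ≤ ENNReal.ofReal s then 1 else 0)) := by
        rw [lintegral_add_right, lintegral_const_mul' _ _ ENNReal.ofReal_ne_top,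
          lintegral_const_mul' _ _ ENNReal.ofReal_ne_top, ← tca_layer volume r hr _ hSm1,
          lintegral_lintegral_swap]
        · congr 2
          refine lintegral_congr fun x => ?_
          rw [lintegral_const_mul]
          apply Measurable.mul (by fun_prop)
          exact Measurable.ite (measurableSet_le (by fun_prop) (by fun_prop)) measurable_const measurable_const
        · apply Measurable.aemeasurable
          exact Measurable.mul (by fun_prop) (Measurable.mul (by fun_prop) hite)
        · apply Measurable.const_mul
          apply Measurable.lintegral_prod_right (f := fun s x => tcaS n ν 1 x * (ENNReal.ofReal (r * s ^ (r-2)) *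
            (if tcaS n ν 1 x ≤ ENNReal.ofReal s then 1 else 0)))
          exact Measurable.mul (by fun_prop) (Measurable.mul (by fun_prop) hite)
    _ ≤ ENNReal.ofReal (2 * 5 ^ n * α ^ n) * (∫⁻ x, tcaS n ν 1 x ^ r) +
        ENNReal.ofReal (2 * α ^ n) * ∫⁻ x, ENNReal.ofReal (r / (1-r)) * tcaS n ν 1 x ^ r := by
        refine add_le_add le_rfl (mul_le_mul_right (lintegral_mono fun x => ?_) _)
        exact tca_tail r hr hr1 _
    _ = _ := by
        rw [lintegral_const_mul' _ _ ENNReal.ofReal_ne_top, ← mul_assoc, ← add_mul,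
          ← ENNReal.ofReal_mul (by positivity), ← ENNReal.ofReal_add (by positivity) (by positivity)]
        congr 2; ring

/-- density of the measure on the half space attached to `f` -/
def tcaG (n : ℕ) (f : ℝ → Rn n → ℂ) (z : ℝ × Rn n) : ℝ≥0∞ :=
  (‖f z.1 z.2‖₊ : ℝ≥0∞) ^ 2 * ENNReal.ofReal (z.1 ^ (-1 - (n:ℝ)))

def tcaNu (n : ℕ) (f : ℝ → Rn n → ℂ) : Measure (ℝ × Rn n) :=
  ((volume.restrict (Ioi (0:ℝ))).prod (volume : Measure (Rn n))).withDensity (tcaG n f)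

instance (n : ℕ) (f : ℝ → Rn n → ℂ) : SFinite (tcaNu n f) := by
  unfold tcaNu; infer_instance

lemma tcaG_meas (n : ℕ) (f : ℝ → Rn n → ℂ) (hf : CcOnPos n f) : Measurable (tcaG n f) := by
  have h1 : Measurable (Function.uncurry f) := hf.1.measurable
  have h2 : Measurable fun z : ℝ × Rn n => (‖Function.uncurry f z‖₊ : ℝ≥0∞) ^ 2 := by fun_prop
  exact Measurable.mul h2 (by fun_prop)

lemma tca_inner (n : ℕ) (f : ℝ → Rn n → ℂ) (hf : CcOnPos n f) (α : ℝ) (x : Rn n) :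
    tcaS n (tcaNu n f) α x = ∫⁻ t in Ioi (0:ℝ),
      (∫⁻ y in ball x (α * t ^ (((1:ℕ):ℝ)⁻¹)), (‖f t y‖₊ : ℝ≥0∞) ^ 2)
        * ENNReal.ofReal (t ^ ((-1:ℝ) - (n:ℝ)/((1:ℕ):ℝ))) := by
  have hm : MeasurableSet {z : ℝ × Rn n | dist x z.2 < α * z.1} :=
    measurableSet_lt (by fun_prop) (by fun_prop)
  rw [tcaS, tcaNu, withDensity_apply _ hm, ← lintegral_indicator hm,
    lintegral_prod _ ((tcaG_meas n f hf).indicator hm).aemeasurable]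
  refine lintegral_congr fun t => ?_
  rw [← lintegral_mul_const' _ _ ENNReal.ofReal_ne_top, ← lintegral_indicator measurableSet_ball]
  refine lintegral_congr fun y => ?_
  simp [indicator_apply, tcaG, dist_comm]

lemma tca_norm_eq (n : ℕ) (f : ℝ → Rn n → ℂ) (hf : CcOnPos n f) (p α : ℝ) :
    tentNorm n 1 (-1) p α f = (∫⁻ x, tcaS n (tcaNu n f) α x ^ (p/2)) ^ (1/p) := by
  simp_rw [tca_inner n f hf]
  rfl

lemma tca_finite (n : ℕ) (f : ℝ → Rn n → ℂ) (hf : CcOnPos n f) (r α : ℝ) (hr : 0 < r)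
    (hα : 1 ≤ α) : ∫⁻ x, tcaS n (tcaNu n f) α x ^ r ≠ ⊤ := by
  obtain ⟨hc, hK, hsub⟩ := hf
  set K := tsupport (Function.uncurry f) with hKdef
  have hKc : IsCompact K := hK
  have hG0 : ∀ z, z ∉ K → tcaG n f z = 0 := by
    intro z hz
    have : Function.uncurry f z = 0 := image_eq_zero_of_notMem_tsupport hz
    have hfz : f z.1 z.2 = 0 := this
    simp [tcaG, hfz]
  obtain ⟨B, hB⟩ : ∃ B : ℝ≥0, ∀ z, tcaG n f z ≤ B := by
    have hcont : ContinuousOn (fun z : ℝ × Rn n => ‖Function.uncurry f z‖ ^ 2 * z.1 ^ (-1 - (n:ℝ))) K := by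
      refine ContinuousOn.mul (by fun_prop) ?_
      intro z hz
      refine ContinuousAt.continuousWithinAt ?_
      exact ContinuousAt.rpow_const continuous_fst.continuousAt (Or.inl (hsub hz).1.ne')
    obtain ⟨B, hB⟩ := hKc.exists_bound_of_continuousOn hcont
    refine ⟨B.toNNReal, fun z => ?_⟩
    by_cases hz : z ∈ K
    · have hb := hB z hz
      have e : tcaG n f z = ENNReal.ofReal (‖Function.uncurry f z‖ ^ 2 * z.1 ^ (-1 - (n:ℝ))) := by
        rw [ENNReal.ofReal_mul (by positivity), ENNReal.ofReal_pow (norm_nonneg _), ofReal_norm_eq_enorm]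
        rfl
      rw [e]
      exact ENNReal.ofReal_le_ofReal ((le_abs_self _).trans hb)
    · rw [hG0 z hz]; exact zero_le
  have hu : tcaNu n f univ ≠ ⊤ := by
    rw [tcaNu, withDensity_apply _ MeasurableSet.univ, Measure.restrict_univ]
    have hle : ∀ z, tcaG n f z ≤ K.indicator (fun _ => (B : ℝ≥0∞)) z := by
      intro z
      by_cases hz : z ∈ K
      · rw [indicator_of_mem hz]; exact hB z
      · rw [hG0 z hz]; exact zero_le
    refine ((lintegral_mono hle).trans_lt ?_).ne
    rw [lintegral_indicator_const hKc.measurableSet]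
    exact ENNReal.mul_lt_top ENNReal.coe_lt_top hKc.measure_lt_top
  obtain ⟨R, hR⟩ := hKc.isBounded.subset_closedBall (0 : ℝ × Rn n)
  have hzero : ∀ x, x ∉ closedBall (0 : Rn n) (R + α * R) → tcaS n (tcaNu n f) α x = 0 := by
    intro x hx
    have hm : MeasurableSet {z : ℝ × Rn n | dist x z.2 < α * z.1} :=
      measurableSet_lt (by fun_prop) (by fun_prop)
    rw [tcaS, tcaNu, withDensity_apply _ hm]
    rw [setLIntegral_congr_fun (g := fun _ => 0) hm]
    · simp
    · intro z hz
      apply hG0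
      intro hzK
      apply hx
      have h1 := hR hzK
      rw [mem_closedBall_zero_iff] at h1 ⊢
      have h2 : ‖z.1‖ ≤ R := (norm_fst_le z).trans h1
      have h3 : ‖z.2‖ ≤ R := (norm_snd_le z).trans h1
      have hz : dist x z.2 < α * z.1 := hz
      have h4 : ‖x‖ ≤ dist x z.2 + ‖z.2‖ := by
        have := dist_triangle x z.2 0
        simpa using this
      have h5 : z.1 ≤ R := (le_abs_self _).trans h2
      nlinarith
  have hle : ∀ x, tcaS n (tcaNu n f) α x ^ r ≤
      (closedBall (0 : Rn n) (R + α * R)).indicator (fun _ => (tcaNu n f univ) ^ r) x := by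
    intro x
    by_cases hx : x ∈ closedBall (0 : Rn n) (R + α * R)
    · rw [indicator_of_mem hx]
      gcongr
      exact measure_mono (subset_univ _)
    · rw [hzero x hx, ENNReal.zero_rpow_of_pos hr]; exact zero_le
  refine ((lintegral_mono hle).trans_lt ?_).ne
  rw [lintegral_indicator_const measurableSet_closedBall]
  exact ENNReal.mul_lt_top (ENNReal.rpow_lt_top_of_nonneg hr.le hu) measure_closedBall_lt_top

lemma tca_upper (n : ℕ) (hn : 1 ≤ n) (p : ℝ) (hp : 1 < p) :
    ∃ C : ℝ, 0 < C ∧ ∀ α : ℝ, 1 ≤ α → ∀ f : ℝ → Rn n → ℂ, CcOnPos n f →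
      tentNorm n 1 (-1) p α f ≤
        ENNReal.ofReal (C * α ^ ((n:ℝ) / min p 2)) * tentNorm n 1 (-1) p 1 f := by
  have hp0 : 0 < p := by linarith
  have key : ∀ (C α : ℝ) (f : ℝ → Rn n → ℂ), 0 < C → 1 ≤ α → CcOnPos n f →
      ∫⁻ x, tcaS n (tcaNu n f) α x ^ (p/2) ≤
        ENNReal.ofReal (C * α ^ n) * ∫⁻ x, tcaS n (tcaNu n f) 1 x ^ (p/2) →
      tentNorm n 1 (-1) p α f ≤
        ENNReal.ofReal (C ^ (1/p) * α ^ ((n:ℝ) / p)) * tentNorm n 1 (-1) p 1 f := by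
    intro C α f hC hα hf h
    have hα0 : 0 < α := by linarith
    rw [tca_norm_eq n f hf, tca_norm_eq n f hf]
    have h1 : C ^ (1/p) * α ^ ((n:ℝ) / p) = (C * α ^ n) ^ (1/p) := by
      rw [Real.mul_rpow hC.le (by positivity), ← Real.rpow_natCast, ← Real.rpow_mul hα0.le]
      congr 2; ring
    rw [h1, ← ENNReal.ofReal_rpow_of_nonneg (by positivity) (by positivity),
      ← ENNReal.mul_rpow_of_nonneg _ _ (by positivity)]
    gcongr
  rcases lt_trichotomy p 2 with h | h | h
  · obtain ⟨C, hC, H⟩ := tca_lt_one n hn (p/2) (by linarith) (by linarith)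
    refine ⟨C ^ (1/p), by positivity, fun α hα f hf => ?_⟩
    rw [min_eq_left h.le]
    exact key C α f hC hα hf (H _ α hα)
  · refine ⟨1, one_pos, fun α hα f hf => ?_⟩
    have := key 1 α f one_pos hα hf (by
      have := tca_eq n (tcaNu n f) α hα
      simp [h, this])
    rw [min_eq_left h.le]
    simpa using this
  · obtain ⟨C, hC, H⟩ := tca_gt_one n hn (p/2) (by linarith)
    refine ⟨C ^ ((1:ℝ)/2), by positivity, fun α hα f hf => ?_⟩
    have hα0 : 0 < α := by linarith
    have h0 := H (tcaNu n f) α hα (tca_finite n f hf _ α (by linarith) hα)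
    have h1 := ENNReal.rpow_le_rpow h0 (by norm_num : (0:ℝ) ≤ 1/2)
    rw [ENNReal.mul_rpow_of_nonneg _ _ (by norm_num), ← ENNReal.rpow_mul, ← ENNReal.rpow_mul,
      ENNReal.ofReal_rpow_of_nonneg (by positivity) (by norm_num)] at h1
    have h2 : 1 / (p/2) * (1/2) = 1 / p := by field_simp
    have h3 : (C * α ^ n) ^ ((1:ℝ)/2) = C ^ ((1:ℝ)/2) * α ^ ((n:ℝ)/2) := by
      rw [Real.mul_rpow hC.le (by positivity), ← Real.rpow_natCast, ← Real.rpow_mul hα0.le]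
      congr 2; ring
    rw [h2, h3] at h1
    rw [min_eq_right h.le, tca_norm_eq n f hf, tca_norm_eq n f hf]
    exact h1

/-- Change of aperture in tent spaces `T^{p,2}`, with the sharp power `α^{n/τ}`,
`τ = min(p,2)`. -/
theorem tent_space_change_of_aperture
    (n : ℕ) (hn : 1 ≤ n) (p : ℝ) (hp : 1 < p) :
    ∃ C : ℝ, 0 < C ∧ ∀ α : ℝ, 1 ≤ α → ∀ f : ℝ → Rn n → ℂ, CcOnPos n f →
      tentNorm n 1 (-1) p 1 f ≤ tentNorm n 1 (-1) p α f ∧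
      tentNorm n 1 (-1) p α f ≤
        ENNReal.ofReal (C * (1 + Real.log α) * α ^ ((n:ℝ) / min p 2)) *
          tentNorm n 1 (-1) p 1 f := by
  obtain ⟨C, hC, H⟩ := tca_upper n hn p hp
  refine ⟨C, hC, fun α hα f hf => ⟨?_, ?_⟩⟩
  · rw [tca_norm_eq n f hf, tca_norm_eq n f hf]
    refine ENNReal.rpow_le_rpow (lintegral_mono fun x => ?_) (by positivity)
    exact ENNReal.rpow_le_rpow (tcaS_mono n _ α hα x) (by positivity)
  · refine (H α hα f hf).trans ?_
    have hlog : 0 ≤ Real.log α := Real.log_nonneg hα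
    have hpos : 0 ≤ α ^ ((n:ℝ) / min p 2) := Real.rpow_nonneg (by linarith) _
    gcongr
    nlinarith
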